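/- arXiv:1706.07865 — 2 statements merged into one kernel-verified Lean document; each statement's English description precedes it below -/
import Mathlib

section
/- For every natural number k ≥ 0, the number of initial consecutive odd entries in row k of Pascal's triangle equals 2^{t(k)}, where t(k) is the number of trailing 1-digits in the binary expansion of k. That is, the least index i ≥ 0 such that C(k,i) is even equals 2^{t(k)} whenever such an i ≤ k exists, and row k consists entirely of odd entries (i.e. k = 2^{t(k)} − 1) otherwise. -/
open Finset

/-- `nu k` is the number of trailing 1-digits in the binary expansion of `k`. -/
def nu (k : ℕ) : ℕ := ((Nat.digits 2 k).takeWhile (· == 1)).length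

theorem nu_even (m : ℕ) : nu (2 * m) = 0 := by
  unfold nu
  rcases Nat.eq_zero_or_pos m with h | h
  · subst h; simp
  · rw [Nat.digits_def' (by norm_num) (by omega)]
    simp

theorem nu_odd (m : ℕ) : nu (2 * m + 1) = nu m + 1 := by
  unfold nu
  rw [Nat.digits_def' (by norm_num) (by omega)]
  have h1 : (2 * m + 1) % 2 = 1 := by omega
  have h2 : (2 * m + 1) / 2 = m := by omega
  rw [h1, h2]
  simp

theorem odd_choose_iff (m i : ℕ) :
    Odd (Nat.choose (2 * m + 1) i) ↔ Odd (Nat.choose m (i / 2)) := by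
  haveI : Fact (Nat.Prime 2) := ⟨Nat.prime_two⟩
  have h := Choose.choose_modEq_choose_mod_mul_choose_div_nat (n := 2 * m + 1) (k := i) (p := 2)
  have h1 : (2 * m + 1) % 2 = 1 := by omega
  have h2 : (2 * m + 1) / 2 = m := by omega
  rw [h1, h2] at h
  have h3 : Nat.choose 1 (i % 2) = 1 := by
    rcases Nat.mod_two_eq_zero_or_one i with h | h <;> rw [h] <;> rfl
  rw [h3, one_mul] at h
  rw [Nat.odd_iff, Nat.odd_iff, h]

theorem run_core (k : ℕ) : (∀ i, i < 2 ^ nu k → Odd (Nat.choose k i)) ∧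
    Even (Nat.choose k (2 ^ nu k)) ∧ 2 ^ nu k ≤ k + 1 := by
  induction k using Nat.strong_induction_on with
  | _ k ih =>
    rcases Nat.even_or_odd' k with ⟨m, h | h⟩
    · subst h
      rw [nu_even]
      refine ⟨?_, ?_, ?_⟩
      · intro i hi
        have : i = 0 := by simpa using hi
        subst this; simp
      · simp
      · simp
    · subst h
      obtain ⟨a, b, c⟩ := ih m (by omega)
      rw [nu_odd, pow_succ]
      refine ⟨?_, ?_, ?_⟩
      · intro i hi
        rw [odd_choose_iff]
        exact a _ (by omega)
      · rw [← Nat.not_odd_iff_even, odd_choose_iff, Nat.mul_div_cancel _ (by norm_num),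
          Nat.not_odd_iff_even]
        exact b
      · omega

/-- The length of the initial run of odd entries in row `k` of
Pascal's triangle equals `2 ^ nu k`: if some entry `C(k,i)` with `i ≤ k` is even,
then the least such index is `2 ^ nu k`; otherwise `k = 2 ^ nu k - 1`. -/
theorem initial_odd_run_pascal (k : ℕ) :
    ((∃ i, i ≤ k ∧ Even (Nat.choose k i)) →
        IsLeast {i | i ≤ k ∧ Even (Nat.choose k i)} (2 ^ nu k)) ∧
      ((∀ i, i ≤ k → Odd (Nat.choose k i)) → k = 2 ^ nu k - 1) := by
  obtain ⟨a, b, c⟩ := run_core k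
  have key : ∀ i, Even (Nat.choose k i) → 2 ^ nu k ≤ i := by
    intro i hi
    by_contra hlt
    exact (Nat.not_odd_iff_even.2 hi) (a i (by omega))
  refine ⟨?_, ?_⟩
  · rintro ⟨i, hi, he⟩
    exact ⟨⟨(key i he).trans hi, b⟩, fun j hj => key j hj.2⟩
  · intro h
    have : ¬ 2 ^ nu k ≤ k := fun hle => (Nat.not_odd_iff_even.2 b) (h _ hle)
    omega
end

section
/- For every sequence δ_m of reals with 0 < δ_m ≤ 1 and δ_m monotonically decreasing to 0, there exists a set E ⊆ ℕ such that ν(k) → ∞ as k → ∞ along E and ρ_m(E) = |E ∩ {1,…,m}|/m ≥ δ_m for all m ≥ 1. -/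
open Filter Finset Topology

/-- `B_p(s) = {k : 2^{p-1} ≤ k < 2^p, ν(k) ≥ s}`. -/
def Bset (p s : ℕ) : Finset ℕ := (Finset.Ico (2 ^ (p - 1)) (2 ^ p)).filter (fun k => s ≤ nu k)

theorem nu_two_mul_add_one (k : ℕ) : nu (2 * k + 1) = nu k + 1 := by
  unfold nu
  rw [Nat.digits_def' (by norm_num) (by omega)]
  have h1 : (2 * k + 1) % 2 = 1 := by omega
  have h2 : (2 * k + 1) / 2 = k := by omega
  rw [h1, h2]
  simp

theorem le_nu_aux (s j : ℕ) : s ≤ nu (2 ^ s * (j + 1) - 1) := by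
  induction s with
  | zero => exact Nat.zero_le _
  | succ s ih =>
    have hp : 0 < 2 ^ s * (j + 1) := by positivity
    have h : 2 ^ (s + 1) * (j + 1) - 1 = 2 * (2 ^ s * (j + 1) - 1) + 1 := by
      have : 2 ^ (s + 1) * (j + 1) = 2 * (2 ^ s * (j + 1)) := by ring
      omega
    rw [h, nu_two_mul_add_one]
    omega

theorem count_aux (s m : ℕ) (hs : 1 ≤ s) (A : Set ℕ)
    (hA : ∀ k, 1 ≤ k → k ≤ m → s ≤ nu k → k ∈ A) :
    m / 2 ^ s ≤ (A ∩ Set.Icc 1 m).ncard := by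
  have h2 : 2 ≤ 2 ^ s := by
    calc 2 = 2 ^ 1 := by norm_num
      _ ≤ 2 ^ s := Nat.pow_le_pow_right (by norm_num) hs
  have hinj : Function.Injective (fun j : ℕ => 2 ^ s * (j + 1) - 1) := by
    intro a b hab
    have ha : 0 < 2 ^ s * (a + 1) := by positivity
    have hb : 0 < 2 ^ s * (b + 1) := by positivity
    have hab' : 2 ^ s * (a + 1) = 2 ^ s * (b + 1) := by
      simp only at hab
      omega
    have := Nat.eq_of_mul_eq_mul_left (by omega) hab'
    omega
  have hcard : (((Finset.range (m / 2 ^ s)).image (fun j : ℕ => 2 ^ s * (j + 1) - 1) :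
      Finset ℕ) : Set ℕ).ncard = m / 2 ^ s := by
    rw [Set.ncard_coe_finset, Finset.card_image_of_injective _ hinj, Finset.card_range]
  rw [← hcard]
  apply Set.ncard_le_ncard _ ((Set.finite_Icc 1 m).inter_of_right A)
  intro x hx
  simp only [Finset.coe_image, Set.mem_image, Finset.coe_range, Set.mem_Iio] at hx
  obtain ⟨j, hj, rfl⟩ := hx
  have h3 : 2 ^ s * (j + 1) ≤ m :=
    le_trans (Nat.mul_le_mul_left _ hj) (Nat.mul_div_le m (2 ^ s))
  have h4 : 2 ^ s ≤ 2 ^ s * (j + 1) := Nat.le_mul_of_pos_right _ (by omega)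
  have h5 : 1 ≤ 2 ^ s * (j + 1) - 1 := by omega
  have h6 : 2 ^ s * (j + 1) - 1 ≤ m := by omega
  exact ⟨hA _ h5 h6 (le_nu_aux s j), h5, h6⟩

/-- For every sequence `δ_m` with `0 < δ_m ≤ 1` decreasing to `0`,
there is a set `E ⊆ ℕ` with `ν(k) → ∞` along `E` and `ρ_m(E) ≥ δ_m` for all `m ≥ 1`. -/
theorem exists_tendsto_nu_with_density_lower_bound (δ : ℕ → ℝ)
    (hδ0 : ∀ m, 0 < δ m) (hδ1 : ∀ m, δ m ≤ 1) (hmono : Antitone δ)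
    (hlim : Tendsto δ atTop (𝓝 0)) :
    ∃ E : Set ℕ, Tendsto (fun k => nu k) (atTop ⊓ 𝓟 E) atTop ∧
      ∀ m, 1 ≤ m → δ m ≤ ((E ∩ Set.Icc 1 m).ncard : ℝ) / m := by
  classical
  let P : ℕ → ℕ → Prop := fun k s => 2 ^ s ≤ k ∧ δ k ≤ (1 / 2 : ℝ) ^ (s + 1)
  let g : ℕ → ℕ := fun k => Nat.findGreatest (P k) k
  have hg : Monotone g := by
    intro a b hab
    apply Nat.findGreatest_mono _ hab
    intro s hs
    exact ⟨hs.1.trans hab, (hmono hab).trans hs.2⟩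
  have hgt : Tendsto g atTop atTop := by
    rw [tendsto_atTop]
    intro s
    have h1 : ∀ᶠ k in atTop, δ k < (1 / 2 : ℝ) ^ (s + 1) :=
      hlim.eventually_lt_const (by positivity)
    filter_upwards [h1, eventually_ge_atTop (2 ^ s)] with k hk1 hk2
    exact Nat.le_findGreatest ((Nat.lt_two_pow_self).le.trans hk2) ⟨hk2, hk1.le⟩
  refine ⟨{k | g k ≤ nu k}, ?_, ?_⟩
  · refine tendsto_atTop_mono' _ ?_ (hgt.mono_left inf_le_left)
    exact mem_inf_of_right (fun k hk => hk)
  · intro m hm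
    have hm0 : (0 : ℝ) < m := by exact_mod_cast hm
    rw [le_div_iff₀ hm0]
    by_cases h0 : g m = 0
    · have : {k | g k ≤ nu k} ∩ Set.Icc 1 m = ((Finset.Icc 1 m : Finset ℕ) : Set ℕ) := by
        ext k
        simp only [Set.mem_inter_iff, Set.mem_setOf_eq, Set.mem_Icc, Finset.coe_Icc,
          and_iff_right_iff_imp]
        intro hk
        have := hg hk.2
        omega
      rw [this, Set.ncard_coe_finset, Nat.card_Icc]
      have := hδ1 m
      simp only [Nat.add_sub_cancel]
      nlinarith
    · obtain ⟨hP1, hP2⟩ : P m (g m) := Nat.findGreatest_of_ne_zero rfl h0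
      have hc := count_aux (g m) m (by omega) {k | g k ≤ nu k}
        (fun k _ hk h => (hg hk).trans h)
      have hq : 1 ≤ m / 2 ^ g m := (Nat.one_le_div_iff (by positivity)).2 hP1
      have hlt : m < 2 ^ g m * (m / 2 ^ g m + 1) :=
        Nat.lt_mul_div_succ m (by positivity)
      have hle : m ≤ 2 ^ (g m + 1) * ({k | g k ≤ nu k} ∩ Set.Icc 1 m).ncard := by
        calc m ≤ 2 ^ g m * (m / 2 ^ g m + 1) := hlt.le
          _ ≤ 2 ^ g m * (2 * (m / 2 ^ g m)) := Nat.mul_le_mul_left _ (by omega)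
          _ ≤ 2 ^ g m * (2 * ({k | g k ≤ nu k} ∩ Set.Icc 1 m).ncard) :=
            Nat.mul_le_mul_left _ (by omega)
          _ = _ := by ring
      have hle' : (m : ℝ) ≤ 2 ^ (g m + 1) * (({k | g k ≤ nu k} ∩ Set.Icc 1 m).ncard : ℝ) := by
        exact_mod_cast hle
      calc δ m * m ≤ (1 / 2 : ℝ) ^ (g m + 1) *
            (2 ^ (g m + 1) * (({k | g k ≤ nu k} ∩ Set.Icc 1 m).ncard : ℝ)) := by
            gcongr
        _ = _ := by
            rw [← mul_assoc, ← mul_pow]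
            norm_num
end
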